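/- For every relational vocabulary ρ and all k, ℓ, q ∈ ℕ there exist q*, r*, s* ∈ ℕ such that the following holds. Let B be a finite ρ-structure with n := |U(B)| ≥ 2, let D be a probability distribution on U(B)^k × {0,1}, and let ε, δ ∈ (0,1) and t ∈ ℕ with t ≥ s*·⌈log(n/δ)/ε²⌉. Let C be the set of all concepts ⟦φ(x̄; v̄)⟧^B with φ(x̄; ȳ) of quantifier rank at most q, |x̄| = k, |ȳ| = ℓ, v̄ ∈ U(B)^ℓ, and let H be the set of all concepts ⟦φ*(x̄; v̄*)⟧^B with φ*(x̄; ȳ) syntactically r*-local of quantifier rank at most q*, |x̄| = k, |ȳ| = ℓ, v̄* ∈ U(B)^ℓ. Then with probability at least 1 − δ over a training sequence T of t examples drawn i.i.d. from D, every H ∈ H with err_T(H) = min_{H' ∈ H} err_T(H') satisfies err_D(H) ≤ min_{C ∈ C} err_D(C) + ε, where err_D(G) := Pr_{(ū,c)∼D}[G(ū) ≠ c]. -/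

import Mathlib

open FirstOrder FirstOrder.Language

universe w

/-- The quantifier rank of a first-order (bounded) formula: the nesting depth of quantifiers. -/
def qRank {L : FirstOrder.Language} : ∀ {α : Type*} {n : ℕ}, L.BoundedFormula α n → ℕ
  | _, _, .falsum => 0
  | _, _, .equal _ _ => 0
  | _, _, .rel _ _ => 0
  | _, _, .imp f g => max (qRank f) (qRank g)
  | _, _, .all f => qRank f + 1

/-- Adjacency in the Gaifman graph of a structure: two distinct elements are adjacent iff
they occur together in some tuple of some relation. -/
def gaifmanAdj (L : FirstOrder.Language) (M : Type w) [L.Structure M] (a b : M) : Prop :=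
  a ≠ b ∧ ∃ (n : ℕ) (R : L.Relations n) (t : Fin n → M),
    Structure.RelMap R t ∧ (∃ i, t i = a) ∧ (∃ j, t j = b)

/-- `distLE L M r a b` means the distance between `a` and `b` in the Gaifman graph of `M`
is at most `r`. -/
def distLE (L : FirstOrder.Language) (M : Type w) [L.Structure M] : ℕ → M → M → Prop
  | 0, a, b => a = b
  | r + 1, a, b => a = b ∨ ∃ c, gaifmanAdj L M a c ∧ distLE L M r c b

theorem distLE_self (L : FirstOrder.Language) (M : Type w) [L.Structure M] (r : ℕ) (a : M) :
    distLE L M r a a := by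
  cases r with
  | zero => rfl
  | succ r => exact Or.inl rfl

/-- The `r`-neighbourhood of a tuple: all elements at Gaifman distance at most `r`
from some component of the tuple. -/
def nbhd (L : FirstOrder.Language) (M : Type w) [L.Structure M] (r : ℕ) {k : ℕ}
    (u : Fin k → M) : Set M :=
  {b | ∃ i, distLE L M r (u i) b}

/-- `IsDistFormula L r d` says that the formula `d`, with two free variables, expresses
that the Gaifman distance between its two arguments is at most `r` (this is the property
of the formula `δ_{≤r}`). -/
def IsDistFormula.{v} (L : FirstOrder.Language) (r : ℕ) (d : L.Formula (Fin 2)) : Prop :=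
  ∀ (M : Type v) [L.Structure M], ∀ a b : M, d.Realize ![a, b] ↔ distLE L M r a b

/-- The radius-`r` relativisation of a formula with free variables `x_0, …, x_{k-1}`,
relative to a formula `d = δ_{≤r}` expressing distance at most `r`: every (universal)
quantifier `∀ y ψ` is replaced by `∀ y (⋁_i δ_{≤r}(x_i, y) → ψ)` (and consequently every
existential quantifier `∃ y ψ` by `∃ y (⋁_i δ_{≤r}(x_i, y) ∧ ψ)`). -/
def relativize {L : FirstOrder.Language} (d : L.Formula (Fin 2)) :
    ∀ {k n : ℕ}, L.BoundedFormula (Fin k) n → L.BoundedFormula (Fin k) n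
  | _, _, .falsum => .falsum
  | _, _, .equal t₁ t₂ => .equal t₁ t₂
  | _, _, .rel R ts => .rel R ts
  | _, _, .imp f g => (relativize d f).imp (relativize d g)
  | k, n, .all f =>
      ((((List.finRange k).map fun i =>
          BoundedFormula.relabel (![Sum.inl i, Sum.inr (Fin.last n)] : Fin 2 → (Fin k) ⊕ (Fin (n + 1))) d).foldr
            (· ⊔ ·) ⊥).imp (relativize d f)).all

/-- A formula is syntactically `r`-local (w.r.t. the distance formula `d = δ_{≤r}`) if it is
the radius-`r` relativisation of some formula. -/
def SynLocal {L : FirstOrder.Language} (d : L.Formula (Fin 2)) {k : ℕ}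
    (φ : L.Formula (Fin k)) : Prop :=
  ∃ ψ : L.Formula (Fin k), φ = relativize d ψ

/-- The local `(q, r)`-type of a tuple `u` in `M`: the set of syntactically `r`-local formulas
(w.r.t. the distance formula `d = δ_{≤r}`) of quantifier rank at most `q` satisfied by `u`. -/
def ltp {L : FirstOrder.Language} (d : L.Formula (Fin 2)) (q : ℕ) (M : Type w) [L.Structure M]
    {k : ℕ} (u : Fin k → M) : Set (L.Formula (Fin k)) :=
  {φ | SynLocal d φ ∧ qRank φ ≤ q ∧ φ.Realize u}

/-- The first-order `q`-type of a tuple `u` in `M`: the set of formulas of quantifier rank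
at most `q` (with free variables among `x_0, …, x_{k-1}`) satisfied by `u`. -/
def ftp {L : FirstOrder.Language} (q : ℕ) (M : Type w) [L.Structure M]
    {k : ℕ} (u : Fin k → M) : Set (L.Formula (Fin k)) :=
  {φ | qRank φ ≤ q ∧ φ.Realize u}

/-- The union of two disjoint structures (realized as a structure on the sum type):
a relation holds of a tuple iff the tuple lies entirely in one part and the relation
holds there. -/
def sumStructure (L : FirstOrder.Language) [L.IsRelational] (M N : Type w)
    [L.Structure M] [L.Structure N] : L.Structure (M ⊕ N) where
  funMap f _ := isEmptyElim f
  RelMap R t :=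
    (∃ s, t = Sum.inl ∘ s ∧ Structure.RelMap R s) ∨
    (∃ s, t = Sum.inr ∘ s ∧ Structure.RelMap R s)

/-- The substructure of `M` induced on a subset `S`. -/
def inducedStructure (L : FirstOrder.Language) [L.IsRelational] {M : Type w} [L.Structure M]
    (S : Set M) : L.Structure S where
  funMap f _ := isEmptyElim f
  RelMap R t := Structure.RelMap R fun i => (t i : M)

/-- A formula `φ(x_1, …, x_k)` is `r`-local if for every structure `M` and every tuple `u`,
`M ⊨ φ(u)` iff the substructure induced on the `r`-neighbourhood of `u` satisfies `φ(u)`. -/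
def RLocal.{v} (L : FirstOrder.Language) [L.IsRelational] (r : ℕ) {k : ℕ}
    (φ : L.Formula (Fin k)) : Prop :=
  ∀ (M : Type v) [L.Structure M] (u : Fin k → M),
    φ.Realize u ↔
      (letI := inducedStructure L (nbhd L M r u)
       Formula.Realize (M := nbhd L M r u) φ
         (fun i => ⟨u i, i, distLE_self L M r (u i)⟩))


/-- The training error of the hypothesis `⟦φ(x̄; v)⟧^B` on the training sequence `T`:
the fraction of examples on which it is wrong. -/
noncomputable def trainErr {L : FirstOrder.Language} {B : Type w} [L.Structure B] {k ℓ t : ℕ}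
    (φ : L.Formula (Fin (k + ℓ))) (v : Fin ℓ → B) (T : Fin t → (Fin k → B) × Bool) : ℝ :=
  (Set.ncard {i : Fin t | ¬(φ.Realize (Fin.append (T i).1 v) ↔ (T i).2 = true)} : ℝ) / t

open MeasureTheory in
/-- The generalisation error of the hypothesis `⟦φ(x̄; v)⟧^B` with respect to a distribution
`D` on `U(B)^k × {0,1}`. -/
noncomputable def genErr {L : FirstOrder.Language} {B : Type w} [L.Structure B] {k ℓ : ℕ}
    [MeasurableSpace ((Fin k → B) × Bool)] (D : MeasureTheory.Measure ((Fin k → B) × Bool))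
    (φ : L.Formula (Fin (k + ℓ))) (v : Fin ℓ → B) : ℝ :=
  (D {p | ¬(φ.Realize (Fin.append p.1 v) ↔ p.2 = true)}).toReal

section Distance

variable {L : FirstOrder.Language} {M : Type w} [L.Structure M]

theorem gaifmanAdj.symm {a b : M} (h : gaifmanAdj L M a b) : gaifmanAdj L M b a := by
  obtain ⟨hne, n, R, t, ht, ha, hb⟩ := h
  exact ⟨hne.symm, n, R, t, ht, hb, ha⟩

theorem distLE.succ {r : ℕ} {a b : M} (h : distLE L M r a b) : distLE L M (r + 1) a b := by
  induction r generalizing a with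
  | zero => exact Or.inl h
  | succ r ih =>
    rcases h with h | ⟨c, hc, h⟩
    · exact Or.inl h
    · exact Or.inr ⟨c, hc, ih h⟩

theorem distLE.mono {r s : ℕ} {a b : M} (h : distLE L M r a b) (hrs : r ≤ s) :
    distLE L M s a b := by
  induction hrs with
  | refl => exact h
  | step _ ih => exact ih.succ

theorem distLE.trans {r s : ℕ} {a b c : M} (h : distLE L M r a b) (h' : distLE L M s b c) :
    distLE L M (r + s) a c := by
  induction r generalizing a with
  | zero =>
    obtain rfl : a = b := h
    simpa using h'
  | succ r ih =>
    rcases h with rfl | ⟨d, hd, h⟩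
    · exact h'.mono (by omega)
    · rw [Nat.add_right_comm]
      exact Or.inr ⟨d, hd, ih h⟩

theorem distLE_one_of_adj {a b : M} (h : gaifmanAdj L M a b) : distLE L M 1 a b :=
  Or.inr ⟨b, h, rfl⟩

theorem distLE.symm {r : ℕ} {a b : M} (h : distLE L M r a b) : distLE L M r b a := by
  induction r generalizing a with
  | zero => exact Eq.symm h
  | succ r ih =>
    rcases h with rfl | ⟨d, hd, h⟩
    · exact distLE_self L M _ _
    · exact (ih h).trans (distLE_one_of_adj hd.symm)

theorem distLE_one_of_relMap {n : ℕ} {R : L.Relations n} {t : Fin n → M}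
    (h : Structure.RelMap R t) (i j : Fin n) : distLE L M 1 (t i) (t j) := by
  by_cases hij : t i = t j
  · exact Or.inl hij
  · exact distLE_one_of_adj ⟨hij, n, R, t, h, ⟨i, rfl⟩, ⟨j, rfl⟩⟩

end Distance

section Game

variable (L : FirstOrder.Language) {M : Type w} [L.Structure M]

/-- A set of pairs is a partial isomorphism if it preserves and reflects equality and all
relations. -/
def IsPartialIso (P : Set (M × M)) : Prop :=
  (∀ p ∈ P, ∀ p' ∈ P, p.1 = p'.1 ↔ p.2 = p'.2) ∧
  ∀ (n : ℕ) (R : L.Relations n) (t t' : Fin n → M), (∀ i, (t i, t' i) ∈ P) →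
    (Structure.RelMap R t ↔ Structure.RelMap R t')

/-- Duplicator wins the `j`-round Ehrenfeucht–Fraïssé game from the position `P` in which the
first component of every new pair is taken from `D` and the second one from `D'`. -/
def GameEquiv (D D' : Set M) : ℕ → Set (M × M) → Prop
  | 0, P => IsPartialIso L P
  | j + 1, P => IsPartialIso L P ∧
      (∀ c ∈ D, ∃ d ∈ D', GameEquiv D D' j (insert (c, d) P)) ∧
      (∀ d ∈ D', ∃ c ∈ D, GameEquiv D D' j (insert (c, d) P))

/-- All elements at Gaifman distance at most `r` from some first component of `P`. -/
def leftNbhd (r : ℕ) (P : Set (M × M)) : Set M := {x | ∃ p ∈ P, distLE L M r p.1 x}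

/-- All elements at Gaifman distance at most `r` from some second component of `P`. -/
def rightNbhd (r : ℕ) (P : Set (M × M)) : Set M := {x | ∃ p ∈ P, distLE L M r p.2 x}

/-- Duplicator wins the `j`-round game from `P` played on the `r`-neighbourhoods of `P`. -/
def LocalEquiv (r j : ℕ) (P : Set (M × M)) : Prop :=
  GameEquiv L (leftNbhd L r P) (rightNbhd L r P) j P

variable {L}

theorem IsPartialIso.mono {P Q : Set (M × M)} (h : IsPartialIso L Q) (hPQ : P ⊆ Q) :
    IsPartialIso L P :=
  ⟨fun p hp p' hp' => h.1 p (hPQ hp) p' (hPQ hp'),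
    fun n R t t' ht => h.2 n R t t' fun i => hPQ (ht i)⟩

theorem IsPartialIso.swap {P : Set (M × M)} (h : IsPartialIso L P) :
    IsPartialIso L (Prod.swap ⁻¹' P) :=
  ⟨fun _ hp _ hp' => (h.1 _ hp _ hp').symm, fun n R t t' ht => (h.2 n R t' t ht).symm⟩

theorem GameEquiv.isPartialIso {D D' : Set M} {j : ℕ} {P : Set (M × M)}
    (h : GameEquiv L D D' j P) : IsPartialIso L P := by
  cases j with
  | zero => exact h
  | succ j => exact h.1

theorem GameEquiv.mono {D D' : Set M} {j : ℕ} {P Q : Set (M × M)}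
    (h : GameEquiv L D D' j Q) (hPQ : P ⊆ Q) : GameEquiv L D D' j P := by
  induction j generalizing P Q with
  | zero => exact IsPartialIso.mono h hPQ
  | succ j ih =>
    refine ⟨h.1.mono hPQ, fun c hc => ?_, fun d hd => ?_⟩
    · obtain ⟨d, hd, h'⟩ := h.2.1 c hc
      exact ⟨d, hd, ih h' (Set.insert_subset_insert hPQ)⟩
    · obtain ⟨c, hc, h'⟩ := h.2.2 d hd
      exact ⟨c, hc, ih h' (Set.insert_subset_insert hPQ)⟩

theorem GameEquiv.of_succ {D D' : Set M} {j : ℕ} {P : Set (M × M)}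
    (h : GameEquiv L D D' (j + 1) P) : GameEquiv L D D' j P := by
  induction j generalizing P with
  | zero => exact h.1
  | succ j ih =>
    refine ⟨h.1, fun c hc => ?_, fun d hd => ?_⟩
    · obtain ⟨d, hd, h'⟩ := h.2.1 c hc
      exact ⟨d, hd, ih h'⟩
    · obtain ⟨c, hc, h'⟩ := h.2.2 d hd
      exact ⟨c, hc, ih h'⟩

theorem GameEquiv.of_le {D D' : Set M} {i j : ℕ} {P : Set (M × M)}
    (h : GameEquiv L D D' j P) (hij : i ≤ j) : GameEquiv L D D' i P := by
  induction hij with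
  | refl => exact h
  | step _ ih => exact ih h.of_succ

theorem GameEquiv.swap {D D' : Set M} {j : ℕ} {P : Set (M × M)}
    (h : GameEquiv L D D' j P) : GameEquiv L D' D j (Prod.swap ⁻¹' P) := by
  induction j generalizing P with
  | zero => exact IsPartialIso.swap h
  | succ j ih =>
    have key : ∀ c d : M, insert (d, c) (Prod.swap ⁻¹' P) ⊆ Prod.swap ⁻¹' (insert (c, d) P) := by
      rintro c d p (rfl | hp)
      · exact Or.inl rfl
      · exact Or.inr hp
    refine ⟨h.1.swap, fun c hc => ?_, fun d hd => ?_⟩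
    · obtain ⟨d, hd, h'⟩ := h.2.2 c hc
      exact ⟨d, hd, (ih h').mono (key _ _)⟩
    · obtain ⟨c, hc, h'⟩ := h.2.1 d hd
      exact ⟨c, hc, (ih h').mono (key _ _)⟩

theorem GameEquiv.diag (D : Set M) (j : ℕ) {P : Set (M × M)} (hP : ∀ p ∈ P, p.1 = p.2) :
    GameEquiv L D D j P := by
  have key : IsPartialIso L P := by
    refine ⟨fun p hp p' hp' => by rw [hP p hp, hP p' hp'], fun n R t t' ht => ?_⟩
    rw [show t = t' from funext fun i => hP _ (ht i)]
  induction j generalizing P with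
  | zero => exact key
  | succ j ih =>
    have hins : ∀ c : M, ∀ p ∈ insert (c, c) P, p.1 = p.2 := by
      rintro c p (rfl | hp)
      · rfl
      · exact hP p hp
    have hiso : ∀ c : M, IsPartialIso L (insert (c, c) P) := fun c => by
      refine ⟨fun p hp p' hp' => by rw [hins c p hp, hins c p' hp'], fun n R t t' ht => ?_⟩
      rw [show t = t' from funext fun i => hins c _ (ht i)]
    exact ⟨key, fun c hc => ⟨c, hc, ih (hins c) (hiso c)⟩,
      fun c hc => ⟨c, hc, ih (hins c) (hiso c)⟩⟩

theorem GameEquiv.trans {D D' D'' : Set M} {j : ℕ} {P P' : Set (M × M)}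
    (h : GameEquiv L D D' j P) (h' : GameEquiv L D' D'' j P') :
    GameEquiv L D D'' j {p | ∃ y, (p.1, y) ∈ P ∧ (y, p.2) ∈ P'} := by
  have key : IsPartialIso L {p : M × M | ∃ y, (p.1, y) ∈ P ∧ (y, p.2) ∈ P'} := by
    refine ⟨?_, fun n R t t' ht => ?_⟩
    · rintro p ⟨y, hy, hy'⟩ p' ⟨z, hz, hz'⟩
      exact (h.isPartialIso.1 _ hy _ hz).trans (h'.isPartialIso.1 _ hy' _ hz')
    · choose s hs hs' using ht
      exact (h.isPartialIso.2 n R t s hs).trans (h'.isPartialIso.2 n R s t' hs')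
  induction j generalizing P P' with
  | zero => exact key
  | succ j ih =>
    have aux : ∀ c d e : M, GameEquiv L D D' j (insert (c, d) P) →
        GameEquiv L D' D'' j (insert (d, e) P') →
        GameEquiv L D D'' j (insert (c, e) {p | ∃ y, (p.1, y) ∈ P ∧ (y, p.2) ∈ P'}) := by
      intro c d e h₁ h₂
      have hiso : IsPartialIso L
          {p : M × M | ∃ y, (p.1, y) ∈ insert (c, d) P ∧ (y, p.2) ∈ insert (d, e) P'} := by
        refine ⟨?_, fun n R t t' ht => ?_⟩
        · rintro p ⟨y, hy, hy'⟩ p' ⟨z, hz, hz'⟩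
          exact (h₁.isPartialIso.1 _ hy _ hz).trans (h₂.isPartialIso.1 _ hy' _ hz')
        · choose s hs hs' using ht
          exact (h₁.isPartialIso.2 n R t s hs).trans (h₂.isPartialIso.2 n R s t' hs')
      refine (ih h₁ h₂ hiso).mono ?_
      rintro p (rfl | ⟨y, hy, hy'⟩)
      · exact ⟨d, Or.inl rfl, Or.inl rfl⟩
      · exact ⟨y, Or.inr hy, Or.inr hy'⟩
    refine ⟨key, fun c hc => ?_, fun e he => ?_⟩
    · obtain ⟨d, hd, h₁⟩ := h.2.1 c hc
      obtain ⟨e, he, h₂⟩ := h'.2.1 d hd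
      exact ⟨e, he, aux c d e h₁ h₂⟩
    · obtain ⟨d, hd, h₂⟩ := h'.2.2 e he
      obtain ⟨c, hc, h₁⟩ := h.2.2 d hd
      exact ⟨c, hc, aux c d e h₁ h₂⟩

theorem GameEquiv.exists_extend {D D' : Set M} {j : ℕ} {P : Set (M × M)} (l : List M)
    (hl : ∀ x ∈ l, x ∈ D) (h : GameEquiv L D D' (j + l.length) P) :
    ∃ Q, P ⊆ Q ∧ GameEquiv L D D' j Q ∧ ∀ x ∈ l, ∃ x', (x, x') ∈ Q := by
  induction l generalizing P with
  | nil => exact ⟨P, subset_rfl, h, by simp⟩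
  | cons c l ih =>
    obtain ⟨d, -, h'⟩ := h.2.1 c (hl c (by simp))
    obtain ⟨Q, hPQ, hQ, hx⟩ := ih (fun x hx => hl x (by simp [hx])) h'
    refine ⟨Q, (Set.subset_insert _ _).trans hPQ, hQ, ?_⟩
    intro x hxl
    rcases List.mem_cons.1 hxl with rfl | hxl
    · exact ⟨d, hPQ (Or.inl rfl)⟩
    · exact hx x hxl

theorem GameEquiv.distLE_right {D D' : Set M} {A : ℕ}
    (hA : ∀ n, Nonempty (L.Relations n) → n ≤ A) {s j : ℕ} {P : Set (M × M)}
    (h : GameEquiv L D D' j P) (hj : A * s ≤ j) {p p' : M × M} (hp : p ∈ P) (hp' : p' ∈ P)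
    (hD : ∀ x, distLE L M s p.1 x → x ∈ D) (hd : distLE L M s p.1 p'.1) :
    distLE L M s p.2 p'.2 := by
  induction s generalizing j P p with
  | zero => exact (h.isPartialIso.1 _ hp _ hp').1 hd
  | succ s ih =>
    rcases hd with hd | ⟨c, ⟨hne, n, R, t, hR, ⟨i₀, hi₀⟩, ⟨i₁, hi₁⟩⟩, hd⟩
    · exact Or.inl ((h.isPartialIso.1 _ hp _ hp').1 hd)
    · have hn : n ≤ A := hA n ⟨R⟩
      have ht : ∀ x ∈ List.ofFn t, x ∈ D := by
        intro x hx
        obtain ⟨i, rfl⟩ := (List.mem_ofFn' t x).1 hx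
        refine hD _ ?_
        rw [← hi₀]
        exact (distLE_one_of_relMap hR i₀ i).mono (by omega)
      have hj' : A * s + (List.ofFn t).length ≤ j := by
        rw [List.length_ofFn]
        rw [Nat.mul_succ] at hj
        omega
      obtain ⟨Q, hPQ, hQ, hx⟩ := (h.of_le hj').exists_extend _ ht
      have hx' : ∀ i, ∃ x', (t i, x') ∈ Q := fun i => hx _ ((List.mem_ofFn' t _).2 ⟨i, rfl⟩)
      choose t' ht' using hx'
      have hiso := hQ.isPartialIso
      have hp₂ : p.2 = t' i₀ := (hiso.1 _ (hPQ hp) _ (ht' i₀)).1 hi₀.symm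
      refine Or.inr ⟨t' i₁, ⟨?_, n, R, t', (hiso.2 n R t t' ht').1 hR,
        ⟨i₀, hp₂.symm⟩, ⟨i₁, rfl⟩⟩, ?_⟩
      · intro heq
        exact hne (((hiso.1 _ (hPQ hp) _ (ht' i₁)).2 heq).trans hi₁)
      · refine ih (p := (t i₁, t' i₁)) hQ le_rfl (ht' i₁) (hPQ hp') (fun x hx => hD x ?_) ?_
        · refine Or.inr ⟨c, ⟨hne, n, R, t, hR, ⟨i₀, hi₀⟩, ⟨i₁, hi₁⟩⟩, ?_⟩
          rw [← hi₁]
          exact hx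
        · simpa only [hi₁] using hd

theorem GameEquiv.distLE_left {D D' : Set M} {A : ℕ}
    (hA : ∀ n, Nonempty (L.Relations n) → n ≤ A) {s j : ℕ} {P : Set (M × M)}
    (h : GameEquiv L D D' j P) (hj : A * s ≤ j) {p p' : M × M} (hp : p ∈ P) (hp' : p' ∈ P)
    (hD : ∀ x, distLE L M s p.2 x → x ∈ D') (hd : distLE L M s p.2 p'.2) :
    distLE L M s p.1 p'.1 :=
  h.swap.distLE_right hA hj (p := p.swap) (p' := p'.swap) hp hp' hD hd

theorem GameEquiv.restrict {D D' : Set M} {A : ℕ}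
    (hA : ∀ n, Nonempty (L.Relations n) → n ≤ A) {r j : ℕ} {P Q : Set (M × M)} (hPQ : P ⊆ Q)
    (hD : leftNbhd L r P ⊆ D) (hD' : rightNbhd L r P ⊆ D')
    (h : GameEquiv L D D' (j + A * r) Q) :
    GameEquiv L (leftNbhd L r P) (rightNbhd L r P) j Q := by
  induction j generalizing Q with
  | zero => exact h.isPartialIso
  | succ j ih =>
    rw [Nat.add_right_comm] at h
    refine ⟨h.isPartialIso, ?_, ?_⟩
    · rintro c ⟨p, hp, hc⟩
      obtain ⟨d, -, h'⟩ := h.2.1 c (hD ⟨p, hp, hc⟩)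
      refine ⟨d, ⟨p, hp, ?_⟩, ih (hPQ.trans (Set.subset_insert _ _)) h'⟩
      exact h'.distLE_right hA (Nat.le_add_left _ _) (p' := (c, d)) (Or.inr (hPQ hp)) (Or.inl rfl)
        (fun x hx => hD ⟨p, hp, hx⟩) hc
    · rintro d ⟨p, hp, hd⟩
      obtain ⟨c, -, h'⟩ := h.2.2 d (hD' ⟨p, hp, hd⟩)
      refine ⟨c, ⟨p, hp, ?_⟩, ih (hPQ.trans (Set.subset_insert _ _)) h'⟩
      exact h'.distLE_left hA (Nat.le_add_left _ _) (p' := (c, d)) (Or.inr (hPQ hp)) (Or.inl rfl)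
        (fun x hx => hD' ⟨p, hp, hx⟩) hd

theorem GameEquiv.localEquiv {D D' : Set M} {A : ℕ}
    (hA : ∀ n, Nonempty (L.Relations n) → n ≤ A) {r j i : ℕ} {P Q : Set (M × M)} (hPQ : P ⊆ Q)
    (hD : leftNbhd L r P ⊆ D) (hD' : rightNbhd L r P ⊆ D') (hi : j + A * r ≤ i)
    (h : GameEquiv L D D' i Q) : LocalEquiv L r j P :=
  (GameEquiv.restrict hA hPQ hD hD' (h.of_le hi)).mono hPQ

theorem LocalEquiv.swap {r j : ℕ} {P : Set (M × M)} (h : LocalEquiv L r j P) :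
    LocalEquiv L r j (Prod.swap ⁻¹' P) := by
  have h' := GameEquiv.swap h
  have h₁ : leftNbhd L r (Prod.swap ⁻¹' P) = rightNbhd L r P := by
    ext x
    exact ⟨fun ⟨p, hp, hx⟩ => ⟨p.swap, hp, hx⟩, fun ⟨p, hp, hx⟩ => ⟨p.swap, hp, hx⟩⟩
  have h₂ : rightNbhd L r (Prod.swap ⁻¹' P) = leftNbhd L r P := by
    ext x
    exact ⟨fun ⟨p, hp, hx⟩ => ⟨p.swap, hp, hx⟩, fun ⟨p, hp, hx⟩ => ⟨p.swap, hp, hx⟩⟩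
  rw [LocalEquiv, h₁, h₂]
  exact h'

/-- Two sets are separated if no tuple of a relation meets both of them. -/
def Separated (L : FirstOrder.Language) {M : Type w} [L.Structure M] (D E : Set M) : Prop :=
  ∀ x ∈ D, ∀ y ∈ E, ¬ distLE L M 1 x y

theorem Separated.forall_mem {D E : Set M} (h : Separated L D E) {n : ℕ} {R : L.Relations n}
    {t : Fin n → M} (hR : Structure.RelMap R t) (ht : ∀ i, t i ∈ D ∪ E) :
    (∀ i, t i ∈ D) ∨ ∀ i, t i ∈ E := by
  by_contra! hcon
  obtain ⟨⟨i, hi⟩, ⟨j, hj⟩⟩ := hcon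
  exact h _ ((ht j).resolve_right hj) _ ((ht i).resolve_left hi) (distLE_one_of_relMap hR j i)

theorem IsPartialIso.relMap_union {D E : Set M} (hDE : Separated L D E) {P Q : Set (M × M)}
    (hP : ∀ p ∈ P, p.1 ∈ D) (hQ : ∀ p ∈ Q, p.1 ∈ E) (h₁ : IsPartialIso L P)
    (h₂ : IsPartialIso L Q) {n : ℕ} {R : L.Relations n} {t t' : Fin n → M}
    (ht : ∀ i, (t i, t' i) ∈ P ∪ Q) (hR : Structure.RelMap R t) : Structure.RelMap R t' := by
  have hdisj : ∀ x ∈ D, x ∉ E := fun x hx hx' => hDE x hx x hx' (distLE_self L M 1 x)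
  have hmem : ∀ i, t i ∈ D ∪ E := fun i => (ht i).imp (hP _) (hQ _)
  rcases hDE.forall_mem hR hmem with h | h
  · exact (h₁.2 n R t t' fun i => (ht i).resolve_right fun hq => hdisj _ (h i) (hQ _ hq)).1 hR
  · exact (h₂.2 n R t t' fun i => (ht i).resolve_left fun hp => hdisj _ (hP _ hp) (h i)).1 hR

theorem IsPartialIso.union {D E D' E' : Set M} (hDE : Separated L D E)
    (hDE' : Separated L D' E') {P Q : Set (M × M)}
    (hP : P ⊆ D ×ˢ D') (hQ : Q ⊆ E ×ˢ E') (h₁ : IsPartialIso L P)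
    (h₂ : IsPartialIso L Q) : IsPartialIso L (P ∪ Q) := by
  have hne : ∀ x ∈ D, ∀ y ∈ E, x ≠ y := by
    rintro x hx y hy rfl
    exact hDE x hx x hy (distLE_self L M 1 x)
  have hne' : ∀ x ∈ D', ∀ y ∈ E', x ≠ y := by
    rintro x hx y hy rfl
    exact hDE' x hx x hy (distLE_self L M 1 x)
  refine ⟨?_, fun n R t t' ht => ⟨?_, ?_⟩⟩
  · rintro p (hp | hp) p' (hp' | hp')
    · exact h₁.1 p hp p' hp'
    · exact iff_of_false (hne _ (hP hp).1 _ (hQ hp').1) (hne' _ (hP hp).2 _ (hQ hp').2)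
    · exact iff_of_false (hne _ (hP hp').1 _ (hQ hp).1).symm
        (hne' _ (hP hp').2 _ (hQ hp).2).symm
    · exact h₂.1 p hp p' hp'
  · exact relMap_union hDE (fun p hp => (hP hp).1) (fun p hp => (hQ hp).1) h₁ h₂ ht
  · exact relMap_union (P := Prod.swap ⁻¹' P) (Q := Prod.swap ⁻¹' Q) hDE'
      (fun p hp => (hP hp).2) (fun p hp => (hQ hp).2) h₁.swap h₂.swap ht

theorem GameEquiv.union {D E D' E' : Set M} (hDE : Separated L D E)
    (hDE' : Separated L D' E') {j : ℕ} {P Q : Set (M × M)}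
    (hP : P ⊆ D ×ˢ D') (hQ : Q ⊆ E ×ˢ E') (h₁ : GameEquiv L D D' j P)
    (h₂ : GameEquiv L E E' j Q) : GameEquiv L (D ∪ E) (D' ∪ E') j (P ∪ Q) := by
  induction j generalizing P Q with
  | zero => exact IsPartialIso.union hDE hDE' hP hQ h₁ h₂
  | succ j ih =>
    refine ⟨IsPartialIso.union hDE hDE' hP hQ h₁.1 h₂.1, ?_, ?_⟩
    · rintro c (hc | hc)
      · obtain ⟨d, hd, h⟩ := h₁.2.1 c hc
        refine ⟨d, Or.inl hd, ?_⟩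
        rw [← Set.insert_union]
        exact ih (Set.insert_subset ⟨hc, hd⟩ hP) hQ h h₂.of_succ
      · obtain ⟨d, hd, h⟩ := h₂.2.1 c hc
        refine ⟨d, Or.inr hd, ?_⟩
        rw [← Set.union_insert]
        exact ih hP (Set.insert_subset ⟨hc, hd⟩ hQ) h₁.of_succ h
    · rintro d (hd | hd)
      · obtain ⟨c, hc, h⟩ := h₁.2.2 d hd
        refine ⟨c, Or.inl hc, ?_⟩
        rw [← Set.insert_union]
        exact ih (Set.insert_subset ⟨hc, hd⟩ hP) hQ h h₂.of_succ
      · obtain ⟨c, hc, h⟩ := h₂.2.2 d hd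
        refine ⟨c, Or.inr hc, ?_⟩
        rw [← Set.union_insert]
        exact ih hP (Set.insert_subset ⟨hc, hd⟩ hQ) h₁.of_succ h

end Game

section Locality

variable {L : FirstOrder.Language} {M : Type w} [L.Structure M]

theorem leftNbhd_union (r : ℕ) (P Q : Set (M × M)) :
    leftNbhd L r (P ∪ Q) = leftNbhd L r P ∪ leftNbhd L r Q := by
  ext x
  constructor
  · rintro ⟨p, hp | hp, hx⟩
    · exact Or.inl ⟨p, hp, hx⟩
    · exact Or.inr ⟨p, hp, hx⟩
  · rintro (⟨p, hp, hx⟩ | ⟨p, hp, hx⟩)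
    · exact ⟨p, Or.inl hp, hx⟩
    · exact ⟨p, Or.inr hp, hx⟩

theorem rightNbhd_union (r : ℕ) (P Q : Set (M × M)) :
    rightNbhd L r (P ∪ Q) = rightNbhd L r P ∪ rightNbhd L r Q := by
  ext x
  constructor
  · rintro ⟨p, hp | hp, hx⟩
    · exact Or.inl ⟨p, hp, hx⟩
    · exact Or.inr ⟨p, hp, hx⟩
  · rintro (⟨p, hp, hx⟩ | ⟨p, hp, hx⟩)
    · exact ⟨p, Or.inl hp, hx⟩
    · exact ⟨p, Or.inr hp, hx⟩

theorem mem_leftNbhd_singleton {r : ℕ} {c d x : M} :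
    x ∈ leftNbhd L r {(c, d)} ↔ distLE L M r c x :=
  ⟨fun ⟨p, hp, hx⟩ => by obtain rfl : p = (c, d) := hp; exact hx, fun hx => ⟨(c, d), rfl, hx⟩⟩

theorem mem_rightNbhd_singleton {r : ℕ} {c d x : M} :
    x ∈ rightNbhd L r {(c, d)} ↔ distLE L M r d x :=
  ⟨fun ⟨p, hp, hx⟩ => by obtain rfl : p = (c, d) := hp; exact hx, fun hx => ⟨(c, d), rfl, hx⟩⟩

theorem subset_nbhd_prod (r : ℕ) (P : Set (M × M)) :
    P ⊆ leftNbhd L r P ×ˢ rightNbhd L r P := fun p hp =>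
  ⟨⟨p, hp, distLE_self L M r _⟩, ⟨p, hp, distLE_self L M r _⟩⟩

theorem LocalEquiv.singleton_refl (r j : ℕ) (c : M) : LocalEquiv L r j {(c, c)} := by
  have h : rightNbhd L r {(c, c)} = leftNbhd L r {(c, c)} := by
    ext x
    rw [mem_leftNbhd_singleton, mem_rightNbhd_singleton]
  rw [LocalEquiv, h]
  refine GameEquiv.diag _ _ ?_
  rintro p hp
  obtain rfl : p = (c, c) := hp
  rfl

theorem LocalEquiv.singleton_trans {r j : ℕ} {c x y : M} (h : LocalEquiv L r j {(c, x)})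
    (h' : LocalEquiv L r j {(y, x)}) : LocalEquiv L r j {(c, y)} := by
  have h₁ : leftNbhd L r {(c, y)} = leftNbhd L r {(c, x)} := by
    ext z
    rw [mem_leftNbhd_singleton, mem_leftNbhd_singleton]
  have h₂ : rightNbhd L r {(c, y)} = leftNbhd L r {(y, x)} := by
    ext z
    rw [mem_leftNbhd_singleton, mem_rightNbhd_singleton]
  have h₃ : rightNbhd L r {(y, x)} = rightNbhd L r {(c, x)} := by
    ext z
    rw [mem_rightNbhd_singleton, mem_rightNbhd_singleton]
  rw [LocalEquiv, h₁, h₂]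
  rw [LocalEquiv, h₃] at h'
  refine (GameEquiv.trans h h'.swap).mono ?_
  rintro p hp
  obtain rfl : p = (c, y) := hp
  exact ⟨x, rfl, rfl⟩

/-- Combining the local equivalence of two positions that are far apart. -/
theorem LocalEquiv.insert_of_far {r j : ℕ} {P : Set (M × M)} {c d : M}
    (h : LocalEquiv L r j P) (h' : LocalEquiv L r j {(c, d)})
    (hc : c ∉ leftNbhd L (2 * r + 1) P) (hd : d ∉ rightNbhd L (2 * r + 1) P) :
    LocalEquiv L r j (insert (c, d) P) := by
  rw [← Set.union_singleton, LocalEquiv, leftNbhd_union, rightNbhd_union]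
  refine GameEquiv.union ?_ ?_ (subset_nbhd_prod r P) (subset_nbhd_prod r _) h h'
  · rintro x ⟨p, hp, hx⟩ y hy hxy
    rw [mem_leftNbhd_singleton] at hy
    exact hc ⟨p, hp, ((hx.trans hxy).trans hy.symm).mono (by omega)⟩
  · rintro x ⟨p, hp, hx⟩ y hy hxy
    rw [mem_rightNbhd_singleton] at hy
    exact hd ⟨p, hp, ((hx.trans hxy).trans hy.symm).mono (by omega)⟩

/-- If `τ` is a property such that every element of `τ` near a second component of `P` has a
counterpart in `τ` near the corresponding first component, and all of `τ` lies near second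
components, then all of `τ` lies near first components. -/
theorem exists_distLE_fst_of_forall_snd {m R : ℕ} {P : Set (M × M)} (hP : P.encard ≤ m)
    (τ : M → Prop) (hτ : ∀ x, τ x → x ∈ rightNbhd L R P)
    (hstep : ∀ p ∈ P, ∀ x, τ x → distLE L M R p.2 x → ∃ y, τ y ∧ distLE L M R p.1 y)
    (hdist : ∀ p ∈ P, ∀ p' ∈ P, ∀ s, s ≤ 4 * R * m →
      distLE L M s p.1 p'.1 → distLE L M s p.2 p'.2)
    {c : M} (hc : τ c) : c ∈ leftNbhd L ((4 * m + 3) * R) P := by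
  let G := {p : M × M // p ∈ P ∧ ∃ x, τ x ∧ distLE L M R p.2 x}
  have hf : ∀ p : G, ∃ p' : G, distLE L M (2 * R) p.1.1 p'.1.2 := by
    rintro ⟨p, hp, x, hx, hpx⟩
    obtain ⟨y, hy, hpy⟩ := hstep p hp x hx hpx
    obtain ⟨p', hp', hpy'⟩ := hτ y hy
    exact ⟨⟨p', hp', y, hy, hpy'⟩, (hpy.trans hpy'.symm).mono (by omega)⟩
  choose f hf using hf
  have chain : ∀ n, n ≤ m → ∀ p p' : G, f^[n] p = f^[n] p' →
      distLE L M (4 * R * n) p.1.2 p'.1.2 := by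
    intro n
    induction n with
    | zero =>
      rintro - p p' h
      rw [show p = p' from h]
      exact distLE_self L M _ _
    | succ n ih =>
      intro hn p p' h
      have h₁ := ih (by omega) (f p) (f p') h
      have h₂ := ((hf p).trans h₁).trans (hf p').symm
      have h₃ : 2 * R + 4 * R * n + 2 * R = 4 * R * (n + 1) := by ring
      rw [h₃] at h₂
      exact hdist _ p.2.1 _ p'.2.1 _ (Nat.mul_le_mul_left _ hn) h₂
  obtain ⟨p, hp, hpc⟩ := hτ c hc
  let p₀ : G := ⟨p, hp, c, hc, hpc⟩
  obtain ⟨a, b, hab, hbm, heq⟩ : ∃ a b : ℕ, a < b ∧ b ≤ m ∧ f^[a] p₀ = f^[b] p₀ := by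
    by_contra! hcon
    have hinj : Function.Injective fun i : Fin (m + 1) => ((f^[i] p₀).1 : M × M) := by
      intro a b hab
      have hab : f^[a] p₀ = f^[b] p₀ := Subtype.ext hab
      rcases lt_trichotomy a b with h | h | h
      · exact absurd hab (hcon _ _ h (by omega))
      · exact h
      · exact absurd hab.symm (hcon _ _ h (by omega))
    have hle : (Set.range fun i : Fin (m + 1) => ((f^[i] p₀).1 : M × M)).encard ≤ m := by
      refine (Set.encard_le_encard ?_).trans hP
      rintro _ ⟨i, rfl⟩
      exact (f^[i] p₀).2.1
    rw [← Set.image_univ, hinj.encard_image, Set.encard_univ] at hle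
    simp only [ENat.card_eq_coe_fintype_card, Fintype.card_fin] at hle
    have := ENat.natCast_le_natCast.1 hle
    omega
  obtain ⟨e, rfl⟩ : ∃ e, b = a + (e + 1) := ⟨b - a - 1, by omega⟩
  rw [Function.iterate_add_apply] at heq
  have h₁ := chain a (by omega) p₀ _ heq
  rw [Function.iterate_succ_apply'] at h₁
  have h₂ := (hf (f^[e] p₀)).trans (h₁.symm.trans hpc)
  refine ⟨_, (f^[e] p₀).2.1, h₂.mono ?_⟩
  have : 4 * R * a ≤ 4 * R * m := Nat.mul_le_mul_left _ (by omega)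
  calc _ ≤ 2 * R + (4 * R * m + R) := by omega
    _ = _ := by ring

theorem LocalEquiv.exists_insert {A : ℕ} (hA : ∀ n, Nonempty (L.Relations n) → n ≤ A)
    {m r j r' : ℕ} (hr' : r' = (4 * m + 3) * (2 * r + 1) + r) {P : Set (M × M)}
    (hP : P.encard ≤ m) (h : LocalEquiv L r' (j + A * r' + 1) P) (c : M) :
    ∃ d, LocalEquiv L r j (insert (c, d) P) := by
  set R := 2 * r + 1 with hR
  have hRr : R ≤ (4 * m + 3) * R := Nat.le_mul_of_pos_left _ (by omega)
  have hAr : A * r ≤ A * r' := Nat.mul_le_mul_left _ (by omega)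
  by_cases hc : c ∈ leftNbhd L ((4 * m + 3) * R) P
  · obtain ⟨p, hp, hpc⟩ := hc
    obtain ⟨d, -, h'⟩ := h.2.1 c ⟨p, hp, hpc.mono (by omega)⟩
    have hpd : distLE L M ((4 * m + 3) * R) p.2 d := by
      refine h'.distLE_right hA ?_ (Or.inr hp) (p' := (c, d)) (Or.inl rfl) ?_ hpc
      · exact (Nat.mul_le_mul_left _ (by omega : _ ≤ r')).trans (Nat.le_add_left _ _)
      · exact fun x hx => ⟨p, hp, hx.mono (by omega)⟩
    refine ⟨d, GameEquiv.localEquiv hA subset_rfl ?_ ?_ (by omega) h'⟩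
    · rintro x ⟨q, rfl | hq, hx⟩
      · exact ⟨p, hp, (hpc.trans hx).mono (by omega)⟩
      · exact ⟨q, hq, hx.mono (by omega)⟩
    · rintro x ⟨q, rfl | hq, hx⟩
      · exact ⟨p, hp, (hpd.trans hx).mono (by omega)⟩
      · exact ⟨q, hq, hx.mono (by omega)⟩
  · have hPr : LocalEquiv L r j P := by
      refine GameEquiv.localEquiv hA subset_rfl ?_ ?_ (by omega) h
      · exact fun x ⟨p, hp, hx⟩ => ⟨p, hp, hx.mono (by omega)⟩
      · exact fun x ⟨p, hp, hx⟩ => ⟨p, hp, hx.mono (by omega)⟩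
    by_contra! hcon
    refine hc (exists_distLE_fst_of_forall_snd hP (fun x => LocalEquiv L r j {(c, x)}) ?_ ?_ ?_
      (LocalEquiv.singleton_refl r j c))
    · intro x hx
      by_contra hxP
      refine hcon x (hPr.insert_of_far hx (fun ⟨p, hp, hpc⟩ => hc ⟨p, hp, hpc.mono hRr⟩) hxP)
    · intro p hp x hx hpx
      obtain ⟨y, -, h'⟩ := h.2.2 x ⟨p, hp, hpx.mono (by omega)⟩
      have hpy : distLE L M R p.1 y := by
        refine h'.distLE_left hA ?_ (Or.inr hp) (p' := (y, x)) (Or.inl rfl) ?_ hpx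
        · exact (Nat.mul_le_mul_left _ (by omega : _ ≤ r')).trans (Nat.le_add_left _ _)
        · exact fun x hx => ⟨p, hp, hx.mono (by omega)⟩
      refine ⟨y, hx.singleton_trans (GameEquiv.localEquiv hA ?_ ?_ ?_ ?_ h'), hpy⟩
      · exact Set.singleton_subset_iff.2 (Or.inl rfl)
      · intro z hz
        rw [mem_leftNbhd_singleton] at hz
        exact ⟨p, hp, (hpy.trans hz).mono (by omega)⟩
      · intro z hz
        rw [mem_rightNbhd_singleton] at hz
        exact ⟨p, hp, (hpx.trans hz).mono (by omega)⟩
      · omega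
    · intro p hp p' hp' s hs hpp
      have hsr : s ≤ r' := by
        have : 4 * R * m + 3 * R = (4 * m + 3) * R := by ring
        omega
      refine h.distLE_right hA ?_ hp hp' (fun x hx => ⟨p, hp, hx.mono hsr⟩) hpp
      have : A * s ≤ A * r' := Nat.mul_le_mul_left _ hsr
      omega

/-- Gaifman locality within a single structure: tuples with equivalent neighbourhoods, for a
sufficiently large radius and sufficiently many rounds, are equivalent. -/
theorem exists_gameEquiv_of_localEquiv (L : FirstOrder.Language) {A : ℕ}
    (hA : ∀ n, Nonempty (L.Relations n) → n ≤ A) (q m : ℕ) :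
    ∃ r j : ℕ, ∀ (M : Type w) [L.Structure M] (P : Set (M × M)), P.encard ≤ m →
      LocalEquiv L r j P → GameEquiv L Set.univ Set.univ q P := by
  induction q generalizing m with
  | zero => exact ⟨0, 0, fun M _ P _ h => h⟩
  | succ q ih =>
    obtain ⟨r, j, ih⟩ := ih (m + 1)
    refine ⟨(4 * m + 3) * (2 * r + 1) + r, j + A * ((4 * m + 3) * (2 * r + 1) + r) + 1,
      fun M _ P hP h => ⟨h.1, fun c _ => ?_, fun d _ => ?_⟩⟩
    · obtain ⟨d, hd⟩ := LocalEquiv.exists_insert hA rfl hP h c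
      exact ⟨d, Set.mem_univ _, ih M _ ((Set.encard_insert_le _ _).trans (by push_cast; gcongr)) hd⟩
    · have hP' : (Prod.swap ⁻¹' P).encard ≤ m := by
        rwa [← Set.image_swap_eq_preimage_swap, Prod.swap_injective.encard_image]
      obtain ⟨c, hc⟩ := LocalEquiv.exists_insert hA rfl hP' h.swap d
      refine ⟨c, Set.mem_univ _, ih M _ ((Set.encard_insert_le _ _).trans (by push_cast; gcongr)) ?_⟩
      have : Prod.swap ⁻¹' (insert (d, c) (Prod.swap ⁻¹' P)) = insert (c, d) P := by
        ext ⟨x, y⟩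
        simp [and_comm]
      rw [← this]
      exact hc.swap

end Locality

section Formulas

variable {L : FirstOrder.Language}

theorem qRank_relabel {α β : Type*} {m n : ℕ} (g : α → β ⊕ Fin n) (φ : L.BoundedFormula α m) :
    qRank (φ.relabel g) = qRank φ := by
  unfold BoundedFormula.relabel
  induction φ with
  | falsum => simp [BoundedFormula.mapTermRel, qRank]
  | equal => simp [BoundedFormula.mapTermRel, qRank]
  | rel => simp [BoundedFormula.mapTermRel, qRank]
  | imp f g ihf ihg => simp [BoundedFormula.mapTermRel, qRank, ihf, ihg]
  | all f ih => simp [BoundedFormula.mapTermRel, qRank, ih]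

theorem qRank_foldr_sup_le {α : Type*} {n c : ℕ} (l : List (L.BoundedFormula α n))
    (h : ∀ φ ∈ l, qRank φ ≤ c) : qRank (l.foldr (· ⊔ ·) ⊥) ≤ c := by
  induction l with
  | nil => simp [Bot.bot, qRank]
  | cons φ l ih =>
    have h₁ : qRank (φ ⊔ l.foldr (· ⊔ ·) ⊥) =
        max (max (qRank φ) 0) (qRank (l.foldr (· ⊔ ·) ⊥)) := by
      simp [max, BoundedFormula.not, Bot.bot, qRank]
    rw [List.foldr_cons, h₁]
    have := h φ (by simp)
    have := ih fun ψ hψ => h ψ (by simp [hψ])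
    omega

theorem qRank_relativize_le (d : L.Formula (Fin 2)) {k n : ℕ} (φ : L.BoundedFormula (Fin k) n) :
    qRank (relativize d φ) ≤ qRank φ + qRank d := by
  induction φ with
  | falsum => simp [relativize, qRank]
  | equal => simp [relativize, qRank]
  | rel => simp [relativize, qRank]
  | imp f g ihf ihg =>
    simp only [relativize, qRank]
    omega
  | @all n f ih =>
    simp only [relativize, qRank]
    have := qRank_foldr_sup_le (c := qRank d) ((List.finRange k).map fun i =>
          BoundedFormula.relabel
            (![Sum.inl i, Sum.inr (Fin.last n)] : Fin 2 → (Fin k) ⊕ (Fin (n + 1))) d) (by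
      intro φ hφ
      obtain ⟨i, -, rfl⟩ := List.mem_map.1 hφ
      exact (qRank_relabel _ _).le)
    omega

variable {M : Type w} [L.Structure M]

theorem realize_relativize_all {r : ℕ} {d : L.Formula (Fin 2)} (hd : IsDistFormula.{w} L r d)
    {k n : ℕ} (f : L.BoundedFormula (Fin k) (n + 1)) (v : Fin k → M) (xs : Fin n → M) :
    (relativize d f.all).Realize v xs ↔
      ∀ c ∈ nbhd L M r v, (relativize d f).Realize v (Fin.snoc xs c) := by
  simp only [relativize, BoundedFormula.realize_all, BoundedFormula.realize_imp,
    BoundedFormula.realize_foldr_sup]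
  refine forall_congr' fun c => imp_congr ?_ Iff.rfl
  have key : ∀ i, (BoundedFormula.relabel (![Sum.inl i, Sum.inr (Fin.last n)] :
      Fin 2 → (Fin k) ⊕ (Fin (n + 1))) d).Realize v (Fin.snoc xs c) ↔ distLE L M r (v i) c := by
    intro i
    rw [← hd M (v i) c, Formula.Realize, BoundedFormula.realize_relabel]
    refine iff_of_eq ?_
    congr 1
    · funext j
      fin_cases j
      · rfl
      · simp
    · exact Subsingleton.elim _ _
  constructor
  · rintro ⟨φ, hφ, h⟩
    obtain ⟨i, -, rfl⟩ := List.mem_map.1 hφ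
    exact ⟨i, (key i).1 h⟩
  · rintro ⟨i, hi⟩
    exact ⟨_, List.mem_map.2 ⟨i, List.mem_finRange i, rfl⟩, (key i).2 hi⟩

theorem exists_conj (d : L.Formula (Fin 2)) {k n j : ℕ} {ι : Type*} [Finite ι]
    (f : ι → L.BoundedFormula (Fin k) n) (hf : ∀ i, qRank (f i) ≤ j) :
    ∃ ψ : L.BoundedFormula (Fin k) n, qRank ψ ≤ j ∧
      ∀ (v : Fin k → M) (xs : Fin n → M), (relativize d ψ).Realize v xs ↔
        ∀ i, (relativize d (f i)).Realize v xs := by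
  have := Fintype.ofFinite ι
  have key : ∀ l : List ι, ∃ ψ : L.BoundedFormula (Fin k) n, qRank ψ ≤ j ∧
      ∀ (v : Fin k → M) (xs : Fin n → M), (relativize d ψ).Realize v xs ↔
        ∀ i ∈ l, (relativize d (f i)).Realize v xs := by
    intro l
    induction l with
    | nil =>
      refine ⟨BoundedFormula.imp .falsum .falsum, by simp [qRank], fun v xs => ?_⟩
      simp [relativize, BoundedFormula.realize_imp]
    | cons i l ih =>
      obtain ⟨ψ, hψ, h⟩ := ih
      refine ⟨((f i).imp (ψ.imp .falsum)).imp .falsum, ?_, fun v xs => ?_⟩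
      · have := hf i
        simp only [qRank]
        omega
      · have hF : ¬ (BoundedFormula.falsum : L.BoundedFormula (Fin k) n).Realize v xs := id
        simp only [relativize, BoundedFormula.realize_imp, h, List.mem_cons, forall_eq_or_imp]
        tauto
  obtain ⟨ψ, hψ, h⟩ := key Finset.univ.toList
  exact ⟨ψ, hψ, fun v xs => by simp [h]⟩

theorem exists_disj (d : L.Formula (Fin 2)) {k n j : ℕ} {ι : Type*} [Finite ι]
    (f : ι → L.BoundedFormula (Fin k) n) (hf : ∀ i, qRank (f i) ≤ j) :
    ∃ ψ : L.BoundedFormula (Fin k) n, qRank ψ ≤ j ∧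
      ∀ (v : Fin k → M) (xs : Fin n → M), (relativize d ψ).Realize v xs ↔
        ∃ i, (relativize d (f i)).Realize v xs := by
  obtain ⟨ψ, hψ, h⟩ := exists_conj (M := M) d (fun i => (f i).imp .falsum) (j := j)
    (by simpa [qRank] using hf)
  refine ⟨ψ.imp .falsum, by simpa [qRank] using hψ, fun v xs => ?_⟩
  have hF : ¬ (BoundedFormula.falsum : L.BoundedFormula (Fin k) n).Realize v xs := id
  simp only [relativize, BoundedFormula.realize_imp, h]
  have hF' : (BoundedFormula.falsum : L.BoundedFormula (Fin k) n).Realize v xs ↔ False :=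
    iff_of_false hF id
  simp only [hF', imp_false, not_forall, not_not]

/-- The position of the game given by two valuations. -/
def pairing {k n : ℕ} (a b : Fin k → M) (xs ys : Fin n → M) : Set (M × M) :=
  Set.range fun i : Fin k ⊕ Fin n => (Sum.elim a xs i, Sum.elim b ys i)

theorem pairing_snoc {k n : ℕ} (a b : Fin k → M) (xs ys : Fin n → M) (c d : M) :
    pairing a b (Fin.snoc xs c : Fin (n + 1) → M) (Fin.snoc ys d : Fin (n + 1) → M) =
      insert (c, d) (pairing a b xs ys) := by
  ext p
  constructor
  · rintro ⟨i | i, rfl⟩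
    · exact Or.inr ⟨Sum.inl i, rfl⟩
    · refine Fin.lastCases ?_ (fun i => ?_) i
      · left
        simp
      · right
        exact ⟨Sum.inr i, by simp⟩
  · rintro (rfl | ⟨i | i, rfl⟩)
    · exact ⟨Sum.inr (Fin.last n), by simp⟩
    · exact ⟨Sum.inl i, rfl⟩
    · exact ⟨Sum.inr i.castSucc, by simp⟩

theorem exists_relativize_separating {r : ℕ} {d : L.Formula (Fin 2)}
    (hd : IsDistFormula.{w} L r d) [Finite M] {k : ℕ} (a b : Fin k → M) (j n : ℕ)
    (xs ys : Fin n → M)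
    (h : ¬ GameEquiv L (nbhd L M r a) (nbhd L M r b) j (pairing a b xs ys)) :
    ∃ ψ : L.BoundedFormula (Fin k) n, qRank ψ ≤ j ∧
      (relativize d ψ).Realize a xs ∧ ¬ (relativize d ψ).Realize b ys := by
  have separate_of_not_iff : ∀ {n j : ℕ} {xs ys : Fin n → M} (ψ : L.BoundedFormula (Fin k) n),
      qRank ψ ≤ j →
      ¬ ((relativize d ψ).Realize a xs ↔ (relativize d ψ).Realize b ys) →
      ∃ ψ : L.BoundedFormula (Fin k) n, qRank ψ ≤ j ∧
        (relativize d ψ).Realize a xs ∧ ¬ (relativize d ψ).Realize b ys := by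
    intro n j xs ys ψ hψ hne
    by_cases ha : (relativize d ψ).Realize a xs
    · exact ⟨ψ, hψ, ha, fun hb => hne (iff_of_true ha hb)⟩
    · refine ⟨ψ.imp .falsum, by simpa [qRank] using hψ, ?_, ?_⟩
      · simp only [relativize, BoundedFormula.realize_imp]
        exact fun h => absurd h ha
      · simp only [relativize, BoundedFormula.realize_imp]
        exact fun h => hne (iff_of_false ha h)
  have iso_case : ∀ {n j : ℕ} {xs ys : Fin n → M}, ¬ IsPartialIso L (pairing a b xs ys) →
      ∃ ψ : L.BoundedFormula (Fin k) n, qRank ψ ≤ j ∧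
        (relativize d ψ).Realize a xs ∧ ¬ (relativize d ψ).Realize b ys := by
    intro n j xs ys h
    by_contra! hcon
    have hiff : ∀ ψ : L.BoundedFormula (Fin k) n, qRank ψ ≤ j →
        ((relativize d ψ).Realize a xs ↔ (relativize d ψ).Realize b ys) := by
      intro ψ hψ
      by_contra hne
      obtain ⟨ψ', h₁, h₂, h₃⟩ := separate_of_not_iff ψ hψ hne
      exact h₃ (hcon ψ' h₁ h₂)
    refine h ⟨?_, fun m R t t' ht => ?_⟩
    · rintro _ ⟨i, rfl⟩ _ ⟨i', rfl⟩
      have := hiff (.equal (Term.var i) (Term.var i')) (by simp [qRank])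
      simp only [relativize] at this
      exact this
    · choose s hs using ht
      obtain rfl : t = fun i => Sum.elim a xs (s i) := funext fun i => congrArg Prod.fst (hs i).symm
      obtain rfl : t' = fun i => Sum.elim b ys (s i) :=
        funext fun i => congrArg Prod.snd (hs i).symm
      have := hiff (.rel R fun i => Term.var (s i)) (by simp [qRank])
      simp only [relativize] at this
      exact this
  induction j generalizing n with
  | zero => exact iso_case h
  | succ j ih =>
    by_cases hiso : IsPartialIso L (pairing a b xs ys)
    swap
    · exact iso_case hiso
    have h' : ¬ ((∀ c ∈ nbhd L M r a, ∃ e ∈ nbhd L M r b,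
        GameEquiv L (nbhd L M r a) (nbhd L M r b) j (insert (c, e) (pairing a b xs ys))) ∧
      (∀ e ∈ nbhd L M r b, ∃ c ∈ nbhd L M r a,
        GameEquiv L (nbhd L M r a) (nbhd L M r b) j (insert (c, e) (pairing a b xs ys)))) :=
      fun hh => h ⟨hiso, hh⟩
    simp only [← pairing_snoc] at h'
    by_cases hforth : ∀ c ∈ nbhd L M r a, ∃ e ∈ nbhd L M r b,
        GameEquiv L (nbhd L M r a) (nbhd L M r b) j
          (pairing a b (Fin.snoc xs c : Fin (n + 1) → M) (Fin.snoc ys e : Fin (n + 1) → M))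
    · have hback := not_and.1 h' hforth
      push Not at hback
      obtain ⟨e, he, hback⟩ := hback
      choose f hf using fun c : nbhd L M r a => ih _ _ _ (hback c c.2)
      obtain ⟨ψ, hψ, hr⟩ := exists_disj (M := M) d f fun c => (hf c).1
      refine ⟨ψ.all, by simpa [qRank] using hψ, ?_, ?_⟩
      · rw [realize_relativize_all hd]
        exact fun c hc => (hr _ _).2 ⟨⟨c, hc⟩, (hf ⟨c, hc⟩).2.1⟩
      · rw [realize_relativize_all hd]
        intro hall
        obtain ⟨c, hc⟩ := (hr _ _).1 (hall e he)
        exact (hf c).2.2 hc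
    · push Not at hforth
      obtain ⟨c, hc, hforth⟩ := hforth
      choose f hf using fun e : nbhd L M r b => ih _ _ _ (hforth e e.2)
      obtain ⟨ψ, hψ, hr⟩ := exists_conj (M := M) d f fun c => (hf c).1
      refine separate_of_not_iff (ψ.imp .falsum).all (by simpa [qRank] using hψ) ?_
      rw [realize_relativize_all hd, realize_relativize_all hd]
      simp only [relativize, BoundedFormula.realize_imp]
      refine fun hiff => (hiff.2 ?_) c hc ((hr _ _).2 fun e => (hf e).2.1)
      intro e he hψe
      exact (hf ⟨e, he⟩).2.2 ((hr _ _).1 hψe ⟨e, he⟩)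

theorem realize_var_pair [L.IsRelational] {α : Type*} {n : ℕ} {P : Set (M × M)} {v v' : α → M}
    {xs xs' : Fin n → M} (hv : ∀ i, (v i, v' i) ∈ P) (hxs : ∀ i, (xs i, xs' i) ∈ P)
    (t : L.Term (α ⊕ Fin n)) :
    (t.realize (Sum.elim v xs), t.realize (Sum.elim v' xs')) ∈ P := by
  cases t with
  | var i =>
    cases i with
    | inl i => exact hv i
    | inr i => exact hxs i
  | func f _ => exact isEmptyElim f

theorem GameEquiv.realize_iff [L.IsRelational] {α : Type*} {n q : ℕ} (φ : L.BoundedFormula α n)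
    (hφ : qRank φ ≤ q) {P : Set (M × M)} (h : GameEquiv L Set.univ Set.univ q P) {v v' : α → M}
    {xs xs' : Fin n → M} (hv : ∀ i, (v i, v' i) ∈ P) (hxs : ∀ i, (xs i, xs' i) ∈ P) :
    φ.Realize v xs ↔ φ.Realize v' xs' := by
  induction φ generalizing q P with
  | falsum => rfl
  | equal t₁ t₂ =>
    exact h.isPartialIso.1 _ (realize_var_pair hv hxs t₁) _ (realize_var_pair hv hxs t₂)
  | rel R ts => exact h.isPartialIso.2 _ R _ _ fun i => realize_var_pair hv hxs (ts i)
  | imp f g ihf ihg =>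
    simp only [qRank] at hφ
    exact imp_congr (ihf (by omega) h hv hxs) (ihg (by omega) h hv hxs)
  | all f ih =>
    simp only [qRank] at hφ
    obtain ⟨q, rfl⟩ : ∃ q', q = q' + 1 := ⟨q - 1, by omega⟩
    have hstep : ∀ c e, GameEquiv L Set.univ Set.univ q (insert (c, e) P) →
        (f.Realize v (Fin.snoc xs c) ↔ f.Realize v' (Fin.snoc xs' e)) := by
      intro c e h'
      refine ih (by omega) h' (fun i => Or.inr (hv i)) fun i => ?_
      refine Fin.lastCases ?_ (fun i => ?_) i
      · simp
      · simpa using Or.inr (hxs i)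
    constructor
    · intro hall e
      obtain ⟨c, -, h'⟩ := h.2.2 e (Set.mem_univ _)
      exact (hstep c e h').1 (hall c)
    · intro hall c
      obtain ⟨e, -, h'⟩ := h.2.1 c (Set.mem_univ _)
      exact (hstep c e h').2 (hall e)

theorem exists_arity_bound (L : FirstOrder.Language) [Finite L.Symbols] :
    ∃ A : ℕ, ∀ n, Nonempty (L.Relations n) → n ≤ A := by
  have : Finite (Σ n, L.Relations n) :=
    Finite.of_injective (fun x => (Sum.inr x : L.Symbols)) Sum.inr_injective
  obtain ⟨A, hA⟩ := (Set.finite_range fun x : Σ n, L.Relations n => x.1).bddAbove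
  exact ⟨A, fun n ⟨R⟩ => hA ⟨⟨n, R⟩, rfl⟩⟩

/-- On every finite structure, every formula of quantifier rank at most `q` is equivalent to a
syntactically local formula of bounded radius and bounded quantifier rank. -/
theorem exists_synLocal_equiv [L.IsRelational] [Finite L.Symbols] (m q : ℕ)
    (dlt : ℕ → L.Formula (Fin 2)) (hdlt : ∀ r, IsDistFormula.{w} L r (dlt r)) :
    ∃ r j : ℕ, ∀ (M : Type w) [L.Structure M] [Finite M] (φ : L.Formula (Fin m)), qRank φ ≤ q →
      ∃ φ' : L.Formula (Fin m), SynLocal (dlt r) φ' ∧ qRank φ' ≤ j ∧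
        ∀ u : Fin m → M, φ'.Realize u ↔ φ.Realize u := by
  obtain ⟨A, hA⟩ := exists_arity_bound L
  obtain ⟨r, j, h⟩ := exists_gameEquiv_of_localEquiv.{w} L hA q m
  refine ⟨r, j + qRank (dlt r), fun M _ _ φ hφ => ?_⟩
  have hsep : ∀ a : {a : Fin m → M // φ.Realize a}, ∀ b : {b : Fin m → M // ¬ φ.Realize b},
      ∃ ψ : L.BoundedFormula (Fin m) 0, qRank ψ ≤ j ∧ (relativize (dlt r) ψ).Realize a.1 default ∧
        ¬ (relativize (dlt r) ψ).Realize b.1 default := by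
    rintro ⟨a, ha⟩ ⟨b, hb⟩
    refine exists_relativize_separating (hdlt r) a b j 0 default default fun hG => ?_
    have hcard : (pairing a b (default : Fin 0 → M) default).encard ≤ m := by
      rw [pairing, ← Set.image_univ]
      refine (Set.encard_image_le _ _).trans ?_
      simp [Set.encard_univ]
    have hl : leftNbhd L r (pairing a b (default : Fin 0 → M) default) = nbhd L M r a := by
      ext x
      constructor
      · rintro ⟨_, ⟨i | i, rfl⟩, hx⟩
        · exact ⟨i, hx⟩
        · exact i.elim0
      · rintro ⟨i, hx⟩
        exact ⟨_, ⟨Sum.inl i, rfl⟩, hx⟩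
    have hr : rightNbhd L r (pairing a b (default : Fin 0 → M) default) = nbhd L M r b := by
      ext x
      constructor
      · rintro ⟨_, ⟨i | i, rfl⟩, hx⟩
        · exact ⟨i, hx⟩
        · exact i.elim0
      · rintro ⟨i, hx⟩
        exact ⟨_, ⟨Sum.inl i, rfl⟩, hx⟩
    have hG' := h M _ hcard (by rw [LocalEquiv, hl, hr]; exact hG)
    exact hb ((hG'.realize_iff φ hφ (fun i => ⟨Sum.inl i, rfl⟩) fun i => i.elim0).1 ha)
  choose f hf using hsep
  choose g hg using fun a => exists_conj (M := M) (dlt r) (f a) fun b => (hf a b).1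
  obtain ⟨ψ, hψ, hr⟩ := exists_disj (M := M) (dlt r) g fun a => (hg a).1
  refine ⟨relativize (dlt r) ψ, ⟨ψ, rfl⟩, ?_, fun u => ?_⟩
  · exact (qRank_relativize_le _ _).trans (by omega)
  · rw [Formula.Realize, hr]
    constructor
    · rintro ⟨a, ha⟩
      by_contra hu
      exact (hf a ⟨u, hu⟩).2.2 (((hg a).2 _ _).1 ha ⟨u, hu⟩)
    · intro hu
      exact ⟨⟨u, hu⟩, ((hg ⟨u, hu⟩).2 _ _).2 fun b => (hf ⟨u, hu⟩ b).2.1⟩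

/-- Formulas of quantifier rank at most `q` are determined by finitely many types. -/
theorem exists_finite_types (L : FirstOrder.Language) [L.IsRelational] [Finite L.Symbols]
    (m q n : ℕ) :
    ∃ (N : ℕ) (tp : ∀ (M : Type w) [L.Structure M], (Fin m → M) → (Fin n → M) → Fin N),
      ∀ φ : L.BoundedFormula (Fin m) n, qRank φ ≤ q → ∃ X : Set (Fin N),
        ∀ (M : Type w) [L.Structure M] (v : Fin m → M) (xs : Fin n → M),
          φ.Realize v xs ↔ tp M v xs ∈ X := by
  have : Finite (Σ n, L.Relations n) :=
    Finite.of_injective (fun x => (Sum.inr x : L.Symbols)) Sum.inr_injective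
  have hvar : ∀ {n : ℕ} (t : L.Term (Fin m ⊕ Fin n)), ∃ i, t = Term.var i := by
    intro n t
    cases t with
    | var i => exact ⟨i, rfl⟩
    | func f _ => exact isEmptyElim f
  let At : ℕ → Type _ := fun n =>
    ((Fin m ⊕ Fin n) × (Fin m ⊕ Fin n)) ⊕ (Σ R : (Σ n, L.Relations n), Fin R.1 → Fin m ⊕ Fin n)
  let holds : ∀ (n : ℕ) (M : Type w) [L.Structure M],
      (Fin m → M) → (Fin n → M) → Set (At n) :=
    fun n M _ v xs => {x | Sum.elim (fun p => Sum.elim v xs p.1 = Sum.elim v xs p.2)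
      (fun p => Structure.RelMap p.1.2 fun i => Sum.elim v xs (p.2 i)) x}
  have step : ∀ (T : ℕ → Type) [∀ n, Finite (T n)] (q : ℕ)
      (ext : ∀ (n : ℕ) (M : Type w) [L.Structure M], (Fin m → M) → (Fin n → M) → T n)
      (_ : ∀ (n : ℕ) (φ : L.BoundedFormula (Fin m) (n + 1)), qRank φ + 1 ≤ q →
        ∃ X : Set (T n), ∀ (M : Type w) [L.Structure M] (v : Fin m → M) (xs : Fin n → M),
          (∀ c : M, φ.Realize v (Fin.snoc xs c)) ↔ ext n M v xs ∈ X) (n : ℕ),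
      ∃ (N : ℕ) (tp : ∀ (M : Type w) [L.Structure M], (Fin m → M) → (Fin n → M) → Fin N),
        ∀ φ : L.BoundedFormula (Fin m) n, qRank φ ≤ q → ∃ X : Set (Fin N),
          ∀ (M : Type w) [L.Structure M] (v : Fin m → M) (xs : Fin n → M),
            φ.Realize v xs ↔ tp M v xs ∈ X := by
    intro T _ q ext hext n
    have key : ∀ (n : ℕ) (φ : L.BoundedFormula (Fin m) n), qRank φ ≤ q →
        ∃ X : Set (Set (At n) × T n), ∀ (M : Type w) [L.Structure M] (v : Fin m → M)
          (xs : Fin n → M), φ.Realize v xs ↔ (holds n M v xs, ext n M v xs) ∈ X := by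
      intro n φ hφ
      induction φ with
      | falsum => exact ⟨∅, fun M _ v xs => iff_of_false id (Set.notMem_empty _)⟩
      | equal t₁ t₂ =>
        obtain ⟨i₁, rfl⟩ := hvar t₁
        obtain ⟨i₂, rfl⟩ := hvar t₂
        exact ⟨{p | Sum.inl (i₁, i₂) ∈ p.1}, fun M _ v xs => Iff.rfl⟩
      | rel R ts =>
        choose i hi using fun k => hvar (ts k)
        obtain rfl : ts = fun k => Term.var (i k) := funext hi
        exact ⟨{p | Sum.inr ⟨⟨_, R⟩, i⟩ ∈ p.1}, fun M _ v xs => Iff.rfl⟩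
      | imp f g ihf ihg =>
        simp only [qRank] at hφ
        obtain ⟨X, hX⟩ := ihf (by omega)
        obtain ⟨Y, hY⟩ := ihg (by omega)
        exact ⟨{p | p ∈ X → p ∈ Y}, fun M _ v xs => imp_congr (hX M v xs) (hY M v xs)⟩
      | @all n f _ =>
        simp only [qRank] at hφ
        obtain ⟨X, hX⟩ := hext n f hφ
        exact ⟨{p | p.2 ∈ X}, fun M _ v xs => hX M v xs⟩
    obtain ⟨N, ⟨e⟩⟩ := Finite.exists_equiv_fin (Set (At n) × T n)
    refine ⟨N, fun M _ v xs => e (holds n M v xs, ext n M v xs), fun φ hφ => ?_⟩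
    obtain ⟨X, hX⟩ := key n φ hφ
    exact ⟨e '' X, fun M _ v xs => (hX M v xs).trans e.injective.mem_set_image.symm⟩
  induction q generalizing n with
  | zero => exact step (fun _ => Unit) 0 (fun _ _ _ _ _ => ()) (fun _ _ h => by omega) n
  | succ q ih =>
    choose N tp h using ih
    refine step (fun n => Set (Fin (N (n + 1)))) (q + 1)
      (fun n M _ v xs => Set.range fun c : M => tp (n + 1) M v (Fin.snoc xs c)) ?_ n
    intro n φ hφ
    obtain ⟨X, hX⟩ := h (n + 1) φ (by omega)
    refine ⟨{S | S ⊆ X}, fun M _ v xs => ?_⟩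
    simp only [hX, Set.mem_ofPred_eq, Set.range_subset_iff]

end Formulas

section Probability

open MeasureTheory ProbabilityTheory

variable {Ω : Type*} [MeasurableSpace Ω]

/-- Hoeffding's inequality for the upper deviation of the empirical mean of a `[0, 1]`-valued function. -/
theorem measure_pi_le_sum_sub_integral_le (D : Measure Ω) [IsProbabilityMeasure D] (t : ℕ)
    {f : Ω → ℝ} (hf : Measurable f) (hf01 : ∀ ω, f ω ∈ Set.Icc (0 : ℝ) 1) {η : ℝ} (hη : 0 ≤ η) :
    (Measure.pi fun _ : Fin t => D).real
      {T | t * η ≤ ∑ i, (f (T i) - ∫ ω, f ω ∂D)} ≤ Real.exp (-(2 * t * η ^ 2)) := by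
  have hsub := hasSubgaussianMGF_of_mem_Icc (μ := D) hf.aemeasurable (Filter.Eventually.of_forall hf01)
  have hsub' : ∀ i ∈ (Finset.univ : Finset (Fin t)), HasSubgaussianMGF
      (fun T : Fin t → Ω => f (T i) - ∫ ω, f ω ∂D) ((‖(1 : ℝ) - 0‖₊ / 2) ^ 2)
      (Measure.pi fun _ : Fin t => D) := by
    intro i _
    have hmp := measurePreserving_eval (fun _ : Fin t => D) i
    refine HasSubgaussianMGF.of_map (Y := fun T : Fin t → Ω => T i)
      (X := fun ω => f ω - ∫ ω, f ω ∂D) hmp.measurable.aemeasurable ?_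
    have : Measure.map (fun T : Fin t → Ω => T i) (Measure.pi fun _ : Fin t => D) = D := hmp.map_eq
    rw [this]
    exact hsub
  have hind : iIndepFun (fun (i : Fin t) (T : Fin t → Ω) => f (T i) - ∫ ω, f ω ∂D)
      (Measure.pi fun _ : Fin t => D) :=
    iIndepFun_pi (X := fun _ ω => f ω - ∫ ω, f ω ∂D) fun _ => (hf.sub_const _).aemeasurable
  refine (HasSubgaussianMGF.measure_sum_ge_le_of_iIndepFun hind hsub' (by positivity)).trans_eq ?_
  congr 1
  rcases Nat.eq_zero_or_pos t with rfl | ht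
  · simp
  · simp
    field_simp

theorem measure_pi_lt_abs_ncard_sub_le [Finite Ω] [MeasurableSingletonClass Ω] (D : Measure Ω)
    [IsProbabilityMeasure D] {t : ℕ} (ht : 0 < t) (S : Set Ω) {η : ℝ} (hη : 0 ≤ η) :
    (Measure.pi fun _ : Fin t => D).real
      {T | η < |(Set.ncard {i | T i ∈ S} : ℝ) / t - (D S).toReal|} ≤
      2 * Real.exp (-(2 * t * η ^ 2)) := by
  classical
  have hS : MeasurableSet S := S.toFinite.measurableSet
  have ht' : (0 : ℝ) < t := by exact_mod_cast ht
  set f : Ω → ℝ := S.indicator 1 with hf_def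
  have hf : Measurable f := measurable_one.indicator hS
  have hf01 : ∀ ω, f ω ∈ Set.Icc (0 : ℝ) 1 := fun ω => by
    by_cases h : ω ∈ S <;> simp [f, h]
  have hf_int : ∫ ω, f ω ∂D = (D S).toReal := by
    rw [hf_def, integral_indicator_one hS]
    rfl
  have hcount : ∀ T : Fin t → Ω, (Set.ncard {i | T i ∈ S} : ℝ) = ∑ i, f (T i) := by
    intro T
    rw [Set.ncard_eq_toFinset_card', Finset.card_eq_sum_ones, Nat.cast_sum]
    simp [f, Set.indicator_apply]
  have h₁ := measure_pi_le_sum_sub_integral_le D t hf hf01 hη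
  have h₂ := measure_pi_le_sum_sub_integral_le D t (f := fun ω => 1 - f ω) (hf.const_sub 1)
    (fun ω => by have := hf01 ω; simp only [Set.mem_Icc] at this ⊢; constructor <;> linarith) hη
  have hf_int₂ : ∫ ω, (1 - f ω) ∂D = 1 - ∫ ω, f ω ∂D := by
    rw [integral_sub (integrable_const _) (Integrable.of_mem_Icc 0 1 hf.aemeasurable
      (Filter.Eventually.of_forall hf01))]
    simp
  rw [hf_int₂] at h₂
  rw [two_mul]
  refine le_trans ?_ (add_le_add h₁ h₂)
  refine le_trans (measureReal_mono ?_ (measure_ne_top _ _)) (measureReal_union_le _ _)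
  intro T hT
  have hsum : ∑ i, (f (T i) - ∫ ω, f ω ∂D) =
      t * ((Set.ncard {i | T i ∈ S} : ℝ) / t - (D S).toReal) := by
    rw [Finset.sum_sub_distrib, ← hcount, hf_int, mul_sub, mul_div_cancel₀ _ ht'.ne']
    simp
  have hsum₂ : ∑ i, (1 - f (T i) - (1 - ∫ ω, f ω ∂D)) =
      -∑ i, (f (T i) - ∫ ω, f ω ∂D) := by
    rw [← Finset.sum_neg_distrib]
    exact Finset.sum_congr rfl fun i _ => by ring
  simp only [Set.mem_union, Set.mem_ofPred_eq, hsum₂, hsum] at hT ⊢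
  rcases lt_abs.1 hT with h | h
  · left
    gcongr
  · right
    rw [← mul_neg]
    gcongr

/-- Uniform convergence of empirical frequencies over a finite family of events. -/
theorem ofReal_le_measure_pi_forall_abs_le [Finite Ω] [MeasurableSingletonClass Ω]
    (D : Measure Ω) [IsProbabilityMeasure D] {t : ℕ} (ht : 0 < t) {ι : Type*} [Fintype ι]
    (S : ι → Set Ω) {η δ : ℝ} (hη : 0 ≤ η)
    (hδ : Fintype.card ι * (2 * Real.exp (-(2 * t * η ^ 2))) ≤ δ) :
    ENNReal.ofReal (1 - δ) ≤ (Measure.pi fun _ : Fin t => D)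
      {T | ∀ a, |(Set.ncard {i | T i ∈ S a} : ℝ) / t - (D (S a)).toReal| ≤ η} := by
  set μ := Measure.pi fun _ : Fin t => D
  set E : Set (Fin t → Ω) :=
    {T | ∀ a, |(Set.ncard {i | T i ∈ S a} : ℝ) / t - (D (S a)).toReal| ≤ η}
  have hE : MeasurableSet E := E.toFinite.measurableSet
  have hcompl : μ.real Eᶜ ≤ δ := by
    have : Eᶜ = ⋃ a, {T | η < |(Set.ncard {i | T i ∈ S a} : ℝ) / t - (D (S a)).toReal|} := by
      ext T
      simp [E]
    rw [this]
    refine (measureReal_iUnion_fintype_le _).trans (le_trans (Finset.sum_le_sum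
      fun a _ => measure_pi_lt_abs_ncard_sub_le D ht (S a) hη) ?_)
    simpa using hδ
  rw [probReal_compl_eq_one_sub hE] at hcompl
  rw [ENNReal.ofReal_le_iff_le_toReal (measure_ne_top _ _)]
  have : (μ E).toReal = μ.real E := rfl
  linarith

theorem card_mul_exp_le {n N l s t : ℕ} (hn : 2 ≤ n) {ε δ : ℝ} (hε : 0 < ε)
    (hδ : δ ∈ Set.Ioo (0 : ℝ) 1) (hs : s = 2 * (N + l + 2))
    (ht : s * ⌈Real.log (n / δ) / ε ^ 2⌉₊ ≤ t) :
    (n ^ l * 2 ^ N : ℝ) * (2 * Real.exp (-(2 * t * (ε / 2) ^ 2))) ≤ δ := by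
  obtain ⟨hδ0, hδ1⟩ := hδ
  have hn' : (2 : ℝ) ≤ n := by exact_mod_cast hn
  have hnδ : (n : ℝ) ≤ n / δ := by
    rw [le_div_iff₀ hδ0]
    nlinarith
  set x : ℝ := n / δ with hx
  have hx2 : 2 ≤ x := hn'.trans hnδ
  have hlog : ((N + l + 2 : ℕ) : ℝ) * Real.log x ≤ 2 * t * (ε / 2) ^ 2 := by
    have h₁ : (s : ℝ) * ⌈Real.log x / ε ^ 2⌉₊ ≤ t := by exact_mod_cast ht
    have h₂ : Real.log x ≤ ⌈Real.log x / ε ^ 2⌉₊ * ε ^ 2 :=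
      (div_le_iff₀ (by positivity)).1 (Nat.le_ceil _)
    subst hs
    push_cast at h₁ ⊢
    calc ((N : ℝ) + l + 2) * Real.log x
        ≤ (N + l + 2) * (⌈Real.log x / ε ^ 2⌉₊ * ε ^ 2) := by gcongr
      _ = 2 * (N + l + 2) * ⌈Real.log x / ε ^ 2⌉₊ * (ε ^ 2 / 2) := by ring
      _ ≤ t * (ε ^ 2 / 2) := by gcongr
      _ = 2 * t * (ε / 2) ^ 2 := by ring
  have hexp : x ^ (N + l + 2) ≤ Real.exp (2 * t * (ε / 2) ^ 2) := by
    rw [← Real.exp_log (show 0 < x by linarith), ← Real.exp_nat_mul]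
    exact Real.exp_le_exp.2 hlog
  have hx1 : 1 / δ ≤ x := by
    rw [hx]
    gcongr
    linarith
  have key : (n ^ l * 2 ^ N : ℝ) * 2 ≤ δ * x ^ (N + l + 2) := by
    calc (n ^ l * 2 ^ N : ℝ) * 2 = δ * (2 ^ N * n ^ l * (2 * (1 / δ))) := by
          field_simp
      _ ≤ δ * (x ^ N * x ^ l * (x * x)) := by gcongr
      _ = δ * x ^ (N + l + 2) := by ring
  rw [← mul_assoc, Real.exp_neg, ← div_eq_mul_inv, div_le_iff₀ (Real.exp_pos _)]
  exact key.trans (by gcongr)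

end Probability

open MeasureTheory in
/-- Theorem 5.7, agnostic PAC learning: with probability at least `1 - δ` over
`t ≥ s*⌈log(n/δ)/ε²⌉` training examples drawn i.i.d. from a distribution `D` on
`U(B)^k × {0,1}`, every hypothesis from the class `H` of syntactically `r*`-local formulas of
quantifier rank at most `q*` (with parameters) minimising the training error has
generalisation error at most `min_{C ∈ C} err_D(C) + ε`, where `C` is the class of concepts
defined by formulas of quantifier rank at most `q` (with parameters). -/
theorem statement_16 {L : FirstOrder.Language} [L.IsRelational] [Finite L.Symbols]
    (k ℓ q : ℕ) (dlt : ℕ → L.Formula (Fin 2)) (hdlt : ∀ r, IsDistFormula.{w} L r (dlt r)) :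
    ∃ qs rs ss : ℕ, ∀ (B : Type w) [L.Structure B] [Fintype B]
      [MeasurableSpace ((Fin k → B) × Bool)] [MeasurableSingletonClass ((Fin k → B) × Bool)],
      2 ≤ Fintype.card B →
      ∀ D : Measure ((Fin k → B) × Bool), IsProbabilityMeasure D →
      ∀ ε δ : ℝ, ε ∈ Set.Ioo (0 : ℝ) 1 → δ ∈ Set.Ioo (0 : ℝ) 1 →
      ∀ t : ℕ, ss * ⌈Real.log ((Fintype.card B : ℝ) / δ) / ε ^ 2⌉₊ ≤ t →
      ENNReal.ofReal (1 - δ) ≤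
        Measure.pi (fun _ : Fin t => D)
          {T : Fin t → (Fin k → B) × Bool |
            ∀ (φs : L.Formula (Fin (k + ℓ))) (vs : Fin ℓ → B),
              SynLocal (dlt rs) φs → qRank φs ≤ qs →
              (∀ (φs' : L.Formula (Fin (k + ℓ))) (vs' : Fin ℓ → B),
                SynLocal (dlt rs) φs' → qRank φs' ≤ qs →
                trainErr φs vs T ≤ trainErr φs' vs' T) →
              ∀ (φ : L.Formula (Fin (k + ℓ))) (v : Fin ℓ → B), qRank φ ≤ q →
                genErr D φs vs ≤ genErr D φ v + ε} := by
  obtain ⟨rs, qs, hloc⟩ := exists_synLocal_equiv (k + ℓ) q dlt hdlt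
  obtain ⟨N, tp, htp⟩ := exists_finite_types.{w} L (k + ℓ) qs 0
  refine ⟨qs, rs, 2 * (N + ℓ + 2), ?_⟩
  intro B _ _ _ _ hB D _ ε δ hε hδ t ht
  classical
  have ht0 : 0 < t := by
    refine lt_of_lt_of_le (Nat.mul_pos (by omega) (Nat.ceil_pos.2 ?_)) ht
    have hB' : (2 : ℝ) ≤ Fintype.card B := by exact_mod_cast hB
    refine div_pos (Real.log_pos ?_) (pow_pos hε.1 2)
    rw [lt_div_iff₀ hδ.1]
    linarith [hδ.2]
  let S : (Fin ℓ → B) × Set (Fin N) → Set ((Fin k → B) × Bool) := fun a =>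
    {p | ¬ (tp B (Fin.append p.1 a.1) default ∈ a.2 ↔ p.2 = true)}
  have hcard : (Fintype.card ((Fin ℓ → B) × Set (Fin N)) : ℝ) *
      (2 * Real.exp (-(2 * t * (ε / 2) ^ 2))) ≤ δ := by
    simpa using card_mul_exp_le hB hε.1 hδ rfl ht
  refine (ofReal_le_measure_pi_forall_abs_le D ht0 S (half_pos hε.1).le hcard).trans
    (measure_mono fun T hT φs vs hφs hqs hmin φ v hφ => ?_)
  have hdev : ∀ (ψ : L.Formula (Fin (k + ℓ))) (u : Fin ℓ → B), qRank ψ ≤ qs →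
      |trainErr ψ u T - genErr D ψ u| ≤ ε / 2 := by
    intro ψ u hψ
    obtain ⟨X, hX⟩ := htp ψ hψ
    have hS : {p : (Fin k → B) × Bool | ¬ (ψ.Realize (Fin.append p.1 u) ↔ p.2 = true)} =
        S (u, X) := by
      ext p
      exact not_congr (iff_congr (hX B _ _) Iff.rfl)
    have h := hT (u, X)
    rw [← hS] at h
    exact h
  obtain ⟨φ', hφ'loc, hφ'rank, hφ'⟩ := hloc B φ hφ
  have hgen : genErr D φ' v = genErr D φ v := by simp only [genErr, hφ']
  have h₁ := abs_le.1 (hdev φs vs hqs)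
  have h₂ := abs_le.1 (hdev φ' v hφ'rank)
  have h₃ := hmin φ' v hφ'loc hφ'rank
  linarith [h₁.1, h₂.2]
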